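/- Fix a half-edge structure (V, H, opp, tgt). Let f be a nowhere-zero flow, let d = ∂₁f, and let (K_e)_{e∈Y} be a finite family of 1-chains. Define P_f = { a ∈ ℝ^Y : for all z ∈ ℤ^Y, Σ_e z_e·a(e) ≤ ⟨f⟩⁺(Σ_e z_e·K_e + B⋆) } and P_d = { a ∈ ℝ^Y : for all z ∈ ℤ^Y, Σ_e z_e·a(e) ≤ (1/2)·inf_{z' ∈ ℤ^V} ( |Σ_e z_e·K_e + Σ_{v∈V} z'(v)·∂⋆₂v| + Σ_{v∈V} z'(v)·d(v) ) }. Then P_f is the translate of P_d by the vector t ∈ ℝ^Y with t(e) = (1/2)·⟨f⟩(K_e); that is, a ∈ P_f if and only if a - t ∈ P_d. (The first claim of Lemma 26 of the paper.) -/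

import Mathlib

/-!
For a 1-chain `L` and a nowhere-zero flow `f`, exactly one half-edge of each pair `{h, opp h}` has
`f = 1`, and `2 * max x 0 = |x| + x` on that half-edge gives `2⟨f⟩⁺(L) = |L| + ⟨f⟩(L)`
(`two_mul_transplus`). Moreover `⟨f⟩` applied to the coboundary `Σ z'(v) ∂⋆₂v` is `Σ z'(v) d(v)`
(`sum_mul_cobound`, stated without halving). Hence for `K = Σ z_e K_e` the integers minimised on the
two sides correspond under the increasing map `t ↦ 2t - ⟨f⟩(K)`, so the minima correspond as well
(`sInf_eq`), and each inequality defining `P_f` at `a` is the inequality for the same `z` defining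
`P_d` at `a - t`.
-/

open Finset

namespace Paper

variable {V H F : Type*} [Fintype V] [Fintype H] [Fintype F]
variable [DecidableEq V] [DecidableEq F]

/-- `f` is a 1-chain: antisymmetric under the involution `opp`. -/
def OneChain (opp : H → H) (f : H → ℤ) : Prop :=
  ∀ h, f (opp h) = - f h

/-- `⟨f⟩(K) = (1/2)·Σ_h f(h)·K(h)`; the sum is even when `f` and `K` are 1-chains. -/
def pairing (f K : H → ℤ) : ℤ := (∑ h, f h * K h) / 2

/-- `⟨f⟩⁺(K) = Σ_{h : f(h) > 0, K(h) > 0} f(h)·K(h)`. -/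
def transplus (f K : H → ℤ) : ℤ :=
  ∑ h, if 0 < f h ∧ 0 < K h then f h * K h else 0

/-- `|K| = (1/2)·Σ_h |K(h)|`; the sum is even when `K` is a 1-chain. -/
def norm1 (K : H → ℤ) : ℤ := (∑ h, |K h|) / 2

/-- The boundary `∂₁ f : V → ℤ` of a 1-chain `f`. -/
def bd1 (tgt : H → V) (f : H → ℤ) (v : V) : ℤ :=
  ∑ h, if tgt h = v then f h else 0

/-- The 1-chain `∂⋆₂ v`. -/
def coB (opp : H → H) (tgt : H → V) (v : V) : H → ℤ :=
  fun h => (if tgt h = v then 1 else 0) - (if tgt (opp h) = v then 1 else 0)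

/-- A coboundary: a ℤ-linear combination of the 1-chains `∂⋆₂ v` for `v ∈ V`. -/
def IsCobound (opp : H → H) (tgt : H → V) (R : H → ℤ) : Prop :=
  ∃ z : V → ℤ, ∀ h, R h = ∑ v, z v * coB opp tgt v h

/-- A 1-cycle: a 1-chain `f` with `∂₁ f = 0`. -/
def OneCycle (opp : H → H) (tgt : H → V) (f : H → ℤ) : Prop :=
  OneChain opp f ∧ ∀ v, bd1 tgt f v = 0

/-- A flow: a 1-chain with all values in `{-1, 0, 1}`. -/
def IsFlow (opp : H → H) (f : H → ℤ) : Prop :=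
  OneChain opp f ∧ ∀ h, f h = -1 ∨ f h = 0 ∨ f h = 1

/-- A nowhere-zero flow: a 1-chain with all values in `{-1, 1}`. -/
def IsNZFlow (opp : H → H) (f : H → ℤ) : Prop :=
  OneChain opp f ∧ ∀ h, f h = 1 ∨ f h = -1

/-- `c ⪯ f`: `0 ≤ c(h) ≤ f(h)` for every half-edge `h` with `f(h) ≥ 0`. -/
def Prec (c f : H → ℤ) : Prop :=
  ∀ h, 0 ≤ f h → 0 ≤ c h ∧ c h ≤ f h

/-- An `f`-circulation: a 1-cycle `c` with `c ⪯ f`. -/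
def IsCirc (opp : H → H) (tgt : H → V) (f c : H → ℤ) : Prop :=
  OneCycle opp tgt c ∧ Prec c f

/-- `⟨f⟩⁺(K + B⋆)`: the minimum of `⟨f⟩⁺(K + R)` over all coboundaries `R`. -/
noncomputable def transplusB (opp : H → H) (tgt : H → V) (f K : H → ℤ) : ℤ :=
  sInf {n : ℤ | ∃ R : H → ℤ, IsCobound opp tgt R ∧ n = transplus f (fun h => K h + R h)}

/-- The degree of a vertex: the number of half-edges with target `v`. -/
def degH (tgt : H → V) (v : V) : ℕ := (Finset.univ.filter fun h => tgt h = v).card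

/-- A sum of an `opp`-invariant function is twice its sum over the half-edges with `f = 1`. In
particular it is even, so the integer divisions by `2` in `pairing` and `norm1` are exact. -/
theorem sum_eq_two_mul {opp : H → H} (hinv : Function.Involutive opp) {f : H → ℤ}
    (hf : IsNZFlow opp f) (q : H → ℤ) (hq : ∀ h, q (opp h) = q h) :
    ∑ h, q h = 2 * ∑ h, if f h = 1 then q h else 0 := by
  have hs : ∑ h, (if f (opp h) = 1 then q (opp h) else 0) = ∑ h, if f h = 1 then q h else 0 :=
    Equiv.sum_comp hinv.toPerm (fun h => if f h = 1 then q h else 0)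
  rw [two_mul]
  nth_rw 1 [← hs]
  rw [← sum_add_distrib]
  refine sum_congr rfl fun h _ => ?_
  rw [hf.1 h, hq h]
  rcases hf.2 h with h1 | h1 <;> simp [h1]

theorem two_mul_pairing {opp : H → H} (hinv : Function.Involutive opp) {f : H → ℤ}
    (hf : IsNZFlow opp f) {L : H → ℤ} (hL : OneChain opp L) :
    2 * pairing f L = ∑ h, f h * L h := by
  have h2 := sum_eq_two_mul hinv hf (fun h => f h * L h) (fun h => by rw [hf.1, hL]; ring)
  unfold pairing
  omega

theorem two_mul_norm1 {opp : H → H} (hinv : Function.Involutive opp) {f : H → ℤ}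
    (hf : IsNZFlow opp f) {L : H → ℤ} (hL : OneChain opp L) :
    2 * norm1 L = ∑ h, |L h| := by
  have h2 := sum_eq_two_mul hinv hf (fun h => |L h|) (fun h => by rw [hL, abs_neg])
  unfold norm1
  omega

theorem two_mul_transplus {opp : H → H} (hinv : Function.Involutive opp) {f : H → ℤ}
    (hf : IsNZFlow opp f) {L : H → ℤ} (hL : OneChain opp L) :
    2 * transplus f L = norm1 L + pairing f L := by
  have h1 := sum_eq_two_mul hinv hf (fun h => f h * L h) (fun h => by rw [hf.1, hL]; ring)
  have h2 := sum_eq_two_mul hinv hf (fun h => |L h|) (fun h => by rw [hL, abs_neg])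
  have h3 : 2 * transplus f L = (∑ h, if f h = 1 then |L h| else 0) +
      ∑ h, if f h = 1 then f h * L h else 0 := by
    unfold transplus
    rw [mul_sum, ← sum_add_distrib]
    refine sum_congr rfl fun h _ => ?_
    rcases hf.2 h with h1 | h1
    · rcases lt_or_ge 0 (L h) with h0 | h0
      · simp [h1, h0, abs_of_pos h0]; ring
      · simp [h1, not_lt.mpr h0, abs_of_nonpos h0]
    · simp [h1]
  have h4 := two_mul_pairing hinv hf hL
  have h5 := two_mul_norm1 hinv hf hL
  omega

theorem oneChain_cobound {opp : H → H} (hinv : Function.Involutive opp) (tgt : H → V)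
    (z' : V → ℤ) : OneChain opp (fun h => ∑ v, z' v * coB opp tgt v h) := by
  intro h
  simp only [coB, hinv h, ← sum_neg_distrib]
  exact sum_congr rfl fun v _ => by ring

/-- Twice the pairing of `f` with a coboundary: `∂⋆₂` is adjoint to `∂₁`. -/
theorem sum_mul_cobound {opp : H → H} (hinv : Function.Involutive opp) (tgt : H → V) {f : H → ℤ}
    (hf : OneChain opp f) (z' : V → ℤ) :
    ∑ h, f h * ∑ v, z' v * coB opp tgt v h = 2 * ∑ v, z' v * bd1 tgt f v := by
  have key : ∀ v, ∑ h, f h * coB opp tgt v h = 2 * bd1 tgt f v := by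
    intro v
    have hs : ∑ h, (if tgt (opp h) = v then f (opp h) else 0) = bd1 tgt f v :=
      Equiv.sum_comp hinv.toPerm (fun h => if tgt h = v then f h else 0)
    rw [two_mul]
    nth_rw 1 [← hs]
    rw [bd1, ← sum_add_distrib]
    refine sum_congr rfl fun h _ => ?_
    rw [hf h, coB]
    split_ifs <;> ring
  simp_rw [mul_sum]
  rw [sum_comm]
  refine sum_congr rfl fun v _ => ?_
  rw [mul_left_comm, ← key v, mul_sum]
  exact sum_congr rfl fun h _ => by ring

theorem norm1_add_eq {opp : H → H} (hinv : Function.Involutive opp) (tgt : H → V) {f : H → ℤ}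
    (hf : IsNZFlow opp f) {K : H → ℤ} (hK : OneChain opp K) (z' : V → ℤ) :
    norm1 (fun h => K h + ∑ v, z' v * coB opp tgt v h) + ∑ v, z' v * bd1 tgt f v =
      2 * transplus f (fun h => K h + ∑ v, z' v * coB opp tgt v h) - pairing f K := by
  have hL : OneChain opp (fun h => K h + ∑ v, z' v * coB opp tgt v h) := by
    intro h
    have := oneChain_cobound hinv tgt z' h
    simp only at this ⊢
    rw [hK h, this]; ring
  have h1 := two_mul_transplus hinv hf hL
  have h2 := two_mul_pairing hinv hf hL
  have h3 := two_mul_pairing hinv hf hK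
  have h4 := sum_mul_cobound hinv tgt hf.1 z'
  simp only [mul_add, sum_add_distrib] at h2
  omega

theorem transplus_nonneg (f K : H → ℤ) : 0 ≤ transplus f K := by
  refine sum_nonneg fun h _ => ?_
  split_ifs with h1
  · exact (mul_pos h1.1 h1.2).le
  · exact le_rfl

theorem sInf_eq {opp : H → H} (hinv : Function.Involutive opp) (tgt : H → V) {f : H → ℤ}
    (hf : IsNZFlow opp f) {K : H → ℤ} (hK : OneChain opp K) :
    sInf {n : ℤ | ∃ z' : V → ℤ, n = norm1 (fun h => K h + ∑ v, z' v * coB opp tgt v h)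
        + ∑ v, z' v * bd1 tgt f v} = 2 * transplusB opp tgt f K - pairing f K := by
  have hbdd : BddBelow {n : ℤ | ∃ R : H → ℤ, IsCobound opp tgt R ∧
      n = transplus f (fun h => K h + R h)} := by
    refine ⟨0, ?_⟩
    rintro n ⟨R, -, rfl⟩
    exact transplus_nonneg _ _
  have hne : {n : ℤ | ∃ R : H → ℤ, IsCobound opp tgt R ∧
      n = transplus f (fun h => K h + R h)}.Nonempty :=
    ⟨_, fun _ => 0, ⟨0, fun h => by simp⟩, rfl⟩
  refine IsLeast.csInf_eq ⟨?_, ?_⟩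
  · obtain ⟨R, ⟨z', hz'⟩, hR⟩ := Int.csInf_mem hne hbdd
    refine ⟨z', ?_⟩
    rw [norm1_add_eq hinv tgt hf hK, transplusB, hR]
    simp only [hz']
  · rintro n ⟨z', rfl⟩
    rw [norm1_add_eq hinv tgt hf hK]
    have : transplusB opp tgt f K ≤
        transplus f (fun h => K h + ∑ v, z' v * coB opp tgt v h) :=
      csInf_le hbdd ⟨_, ⟨z', fun _ => rfl⟩, rfl⟩
    omega

theorem pairing_sum {opp : H → H} (hinv : Function.Involutive opp) {f : H → ℤ}
    (hf : IsNZFlow opp f) {Y : Type*} [Fintype Y] {Ke : Y → H → ℤ}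
    (hKe : ∀ e, OneChain opp (Ke e)) (z : Y → ℤ) (hK : OneChain opp (fun h => ∑ e, z e * Ke e h)) :
    pairing f (fun h => ∑ e, z e * Ke e h) = ∑ e, z e * pairing f (Ke e) := by
  have h1 := two_mul_pairing hinv hf hK
  have h2 : 2 * ∑ e, z e * pairing f (Ke e) = ∑ h, f h * ∑ e, z e * Ke e h := by
    simp_rw [mul_sum]
    rw [sum_comm]
    refine sum_congr rfl fun e _ => ?_
    rw [mul_left_comm, two_mul_pairing hinv hf (hKe e), mul_sum]
    exact sum_congr rfl fun h _ => by ring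
  omega

theorem statement_15
    (opp : H → H) (tgt : H → V)
    (hinv : Function.Involutive opp) (hfp : ∀ h, opp h ≠ h)
    (f : H → ℤ) (hf : IsNZFlow opp f)
    (d : V → ℤ) (hd : ∀ v, d v = bd1 tgt f v)
    {Y : Type*} [Fintype Y]
    (Ke : Y → H → ℤ) (hKe : ∀ e, OneChain opp (Ke e))
    (a : Y → ℝ) :
    (∀ z : Y → ℤ, (∑ e, (z e : ℝ) * a e) ≤
        (transplusB opp tgt f (fun h => ∑ e, z e * Ke e h) : ℝ)) ↔
    (∀ z : Y → ℤ,
      (∑ e, (z e : ℝ) * (a e - (pairing f (Ke e) : ℝ) / 2)) ≤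
        (1 / 2 : ℝ) *
          ((sInf {n : ℤ | ∃ z' : V → ℤ,
              n = norm1 (fun h => (∑ e, z e * Ke e h) + ∑ v, z' v * coB opp tgt v h)
                    + ∑ v, z' v * d v} : ℤ) : ℝ)) := by
  obtain rfl : d = bd1 tgt f := funext hd
  refine forall_congr' fun z => ?_
  have hK : OneChain opp (fun h => ∑ e, z e * Ke e h) := by
    intro h
    simp only [← sum_neg_distrib]
    exact sum_congr rfl fun e _ => by rw [hKe e h]; ring
  rw [sInf_eq hinv tgt hf hK, pairing_sum hinv hf hKe z hK]
  have hsum : ∑ e, (z e : ℝ) * (a e - (pairing f (Ke e) : ℝ) / 2) =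
      ∑ e, (z e : ℝ) * a e - (1 / 2) * ∑ e, (z e : ℝ) * (pairing f (Ke e) : ℝ) := by
    rw [mul_sum, ← sum_sub_distrib]
    exact sum_congr rfl fun e _ => by ring
  rw [hsum]
  push_cast
  constructor <;> intro h <;> linarith

end Paper
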